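/- Let X = {P_1,...,P_s} be distinct points in P^n with positive integers m_1,...,m_s, and put I = ℘_1^{m_1} ∩ ... ∩ ℘_s^{m_s}. If Y ⊆ X and J = ∩_{P_i ∈ Y} ℘_i^{m_i}, then reg(R/J) ≤ reg(R/I). -/

import Mathlib

open MvPolynomial

noncomputable section

/-- The defining prime ideal of the point of projective space with homogeneous
coordinates `p`: the ideal generated by the linear forms vanishing at `p`. -/
def pointIdeal {K : Type} [Field K] {N : ℕ} (p : Fin N → K) :
    Ideal (MvPolynomial (Fin N) K) :=
  Ideal.span {f | f.IsHomogeneous 1 ∧ eval p f = 0}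

/-- The ideal of the fat point scheme `m₁P₁ + ⋯ + m_sP_s`. -/
def fatIdeal {K : Type} [Field K] {N s : ℕ} (p : Fin s → Fin N → K) (m : Fin s → ℕ) :
    Ideal (MvPolynomial (Fin N) K) :=
  ⨅ i, pointIdeal (p i) ^ (m i)

/-- `dim_K` of the degree-`t` graded piece of the ideal `I`. -/
def gradedDim (K : Type) [Field K] {N : ℕ} (I : Ideal (MvPolynomial (Fin N) K)) (t : ℕ) : ℕ :=
  Module.finrank K ↥(homogeneousSubmodule (Fin N) K t ⊓ I.restrictScalars K)

/-- The Hilbert function of `R/I` in degree `t`. -/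
def hilbFn (K : Type) [Field K] {N : ℕ} (I : Ideal (MvPolynomial (Fin N) K)) (t : ℕ) : ℕ :=
  Module.finrank K ↥(homogeneousSubmodule (Fin N) K t) - gradedDim K I t

/-- The regularity index of `R/I` relative to the multiplicity `e`:
the least `t` with `H_{R/I}(t) = e`. -/
def regIndex (K : Type) [Field K] {N : ℕ} (I : Ideal (MvPolynomial (Fin N) K)) (e : ℕ) : ℕ :=
  sInf {t | hilbFn K I t = e}

/-- The multiplicity `e(R/I) = ∑ C(mᵢ+n-1, n)` of a fat point scheme in `ℙⁿ`. -/
def fatMult (n : ℕ) {s : ℕ} (m : Fin s → ℕ) : ℕ :=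
  ∑ i, (m i + n - 1).choose n

/-- The regularity index of the fat point scheme `m₁P₁ + ⋯ + m_sP_s` in `ℙⁿ`. -/
def regFat (K : Type) [Field K] {n s : ℕ} (p : Fin s → Fin (n + 1) → K) (m : Fin s → ℕ) : ℕ :=
  regIndex K (fatIdeal p m) (fatMult n m)

/-- The coordinate vectors `p i` represent distinct points of projective space. -/
def ProjDistinct {K : Type} [Field K] {N s : ℕ} (p : Fin s → Fin N → K) : Prop :=
  (∀ i, p i ≠ 0) ∧ ∀ i j, i ≠ j → ∀ c : K, p i ≠ c • p j

/-- The points `p i`, `i ∈ Q`, lie on a `j`-dimensional linear subspace of `ℙⁿ`. -/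
def OnLinearSubspace {K : Type} [Field K] {N s : ℕ} (p : Fin s → Fin N → K)
    (Q : Finset (Fin s)) (j : ℕ) : Prop :=
  ∃ W : Submodule K (Fin N → K), Module.finrank K ↥W ≤ j + 1 ∧ ∀ i ∈ Q, p i ∈ W

open Classical in
/-- The Segre bound `T(Z) = max {T_j(Z) | j = 1,…,n}` for fat points in `ℙⁿ`. -/
def segreBound {K : Type} [Field K] (n : ℕ) {s : ℕ} (p : Fin s → Fin (n + 1) → K)
    (m : Fin s → ℕ) : ℕ :=
  (Finset.Icc 1 n).sup fun j =>
    Finset.univ.powerset.sup fun Q =>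
      if Q.Nonempty ∧ OnLinearSubspace p Q j then (∑ i ∈ Q, m i + j - 2) / j else 0

/-- The standard coordinate point `(1,0,…,0)`. -/
def stdPt (K : Type) [Field K] (N : ℕ) : Fin N → K := fun j => if (j : ℕ) = 0 then 1 else 0

/-!
Write `H_I` for the Hilbert function of `R/I` and `e_A` for the multiplicity of the fat points
indexed by `A`. For homogeneous ideals, `H_{I ∩ J} + H_{I + J} = H_I + H_J`, so `H` is subadditive
on intersections. A linear form not vanishing at a point `P` with prime ideal `℘` is regular modulo
`℘ ^ m`, which gives `H_{℘ ^ m}(t) = C(min(t, m - 1) + n, n)`. Hence the Hilbert function of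
any fat point scheme is bounded by its multiplicity, and attains it in large degrees because the
ideals of distinct points are comaximal up to a power of the irrelevant ideal. If `H_I(t) = e_X`,
then `e_X ≤ H_J(t) + H_{J'}(t) ≤ e_Y + e_{X ∖ Y} = e_X`, where `J'` is the ideal of the points
outside `Y`, and so `H_J(t) = e_Y`.
-/

section Ideal

variable {A ι : Type*} [CommRing A]

lemma sup_pow_le_sup_pow (I J : Ideal A) (k : ℕ) : (I ⊔ J) ^ k ≤ I ⊔ J ^ k := by
  induction k with
  | zero => simp
  | succ k ih =>
    calc (I ⊔ J) ^ (k + 1) ≤ (I ⊔ J ^ k) * (I ⊔ J) := by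
          rw [pow_succ]; exact Ideal.mul_mono_left ih
      _ = I * (I ⊔ J) ⊔ (J ^ k * I ⊔ J ^ (k + 1)) := by
          rw [Ideal.sup_mul, Ideal.mul_sup (J ^ k), pow_succ]
      _ ≤ I ⊔ J ^ (k + 1) :=
          sup_le (Ideal.mul_le_left.trans le_sup_left) (sup_le_sup_right Ideal.mul_le_right _)

lemma sup_le_radical_pow_sup_pow (I J : Ideal A) (a b : ℕ) :
    I ⊔ J ≤ (I ^ a ⊔ J ^ b).radical :=
  sup_le (fun _ hx ↦ ⟨a, Ideal.mem_sup_left (Ideal.pow_mem_pow hx a)⟩)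
    fun _ hx ↦ ⟨b, Ideal.mem_sup_right (Ideal.pow_mem_pow hx b)⟩

lemma le_radical_sup_iInf {M I : Ideal A} {J : ι → Ideal A} {T : Finset ι}
    (h : ∀ j ∈ T, M ≤ (I ⊔ J j).radical) : M ≤ (I ⊔ ⨅ j ∈ T, J j).radical := by
  rw [Ideal.radical_eq_sInf]
  refine le_sInf fun P ⟨hle, hP⟩ ↦ ?_
  rw [sup_le_iff, ← Finset.inf_eq_iInf, hP.inf_le'] at hle
  obtain ⟨hI, j, hj, hJ⟩ := hle
  exact (h j hj).trans (hP.radical_le_iff.mpr (sup_le hI hJ))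

end Ideal

attribute [local instance] MvPolynomial.gradedAlgebra

instance finite_homogeneousSubmodule {σ R : Type*} [Finite σ] [CommSemiring R] (t : ℕ) :
    Module.Finite R ↥(homogeneousSubmodule σ R t) :=
  Module.Finite.iff_fg.mpr (homogeneousSubmodule_fg σ R t)

section Polynomial

variable {σ R : Type*} [CommRing R]

lemma finrank_homogeneousSubmodule [Nontrivial R] (n t : ℕ) :
    Module.finrank R ↥(homogeneousSubmodule (Fin (n + 1)) R t) = (t + n).choose n := by
  have hsupp : {d : Fin (n + 1) →₀ ℕ | d.degree = t} =
      ↑(Finset.finsuppAntidiag (Finset.univ : Finset (Fin (n + 1))) t) := by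
    ext d
    simp [Finsupp.degree_eq_sum]
  rw [show homogeneousSubmodule (Fin (n + 1)) R t = restrictSupport R {d | d.degree = t} from
      homogeneousSubmodule_eq_finsupp_supported _ _ t,
    Module.finrank_eq_nat_card_basis (basisRestrictSupport R _), hsupp, Nat.card_eq_card_toFinset,
    Finset.toFinset_coe, Finset.card_finsuppAntidiag_nat_eq_choose, Finset.card_univ,
    Fintype.card_fin, show n + 1 + t - 1 = t + n by omega, Nat.choose_symm_add]

lemma mem_idealOfVars_pow_of_isHomogeneous {t : ℕ} {f : MvPolynomial σ R}
    (hf : f.IsHomogeneous t) : f ∈ idealOfVars σ R ^ t :=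
  (mem_pow_idealOfVars_iff' t f).mpr fun _ hd ↦ hf.coeff_eq_zero hd.ne

lemma eq_zero_of_isHomogeneous_of_mem_idealOfVars_pow {t k : ℕ} {f : MvPolynomial σ R}
    (hf : f.IsHomogeneous t) (hmem : f ∈ idealOfVars σ R ^ k) (htk : t < k) : f = 0 := by
  rw [mem_pow_idealOfVars_iff'] at hmem
  ext d
  rcases eq_or_ne d.degree t with hd | hd
  · simpa using hmem d (hd.trans_lt htk)
  · simpa using hf.coeff_eq_zero hd

lemma isHomogeneous_of_isHomogeneous_mul [IsDomain R] {d t : ℕ} {l g : MvPolynomial σ R}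
    (hl : l.IsHomogeneous d) (hl0 : l ≠ 0) (hg : (l * g).IsHomogeneous (d + t)) :
    g.IsHomogeneous t := by
  have hcomp : homogeneousComponent (d + t) (l * g) = l * homogeneousComponent t g := by
    rw [← decomposition.decompose'_apply, ← decomposition.decompose'_apply]
    exact DirectSum.coe_decompose_mul_add_of_left_mem (homogeneousSubmodule σ R) hl
  rw [homogeneousComponent_eq_self hg] at hcomp
  rw [mul_left_cancel₀ hl0 hcomp]
  exact homogeneousComponent_isHomogeneous t g

lemma isHomogeneous_ideal_pow {I : Ideal (MvPolynomial σ R)}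
    (hI : I.IsHomogeneous (homogeneousSubmodule σ R)) (k : ℕ) :
    (I ^ k).IsHomogeneous (homogeneousSubmodule σ R) := by
  induction k with
  | zero => simpa only [pow_zero, Ideal.one_eq_top] using Ideal.IsHomogeneous.top _
  | succ k ih => rw [pow_succ]; exact ih.mul hI

lemma isHomogeneous_span_singleton {d : ℕ} {l : MvPolynomial σ R} (hl : l.IsHomogeneous d) :
    (Ideal.span {l}).IsHomogeneous (homogeneousSubmodule σ R) :=
  Ideal.homogeneous_span _ _ fun _ hx ↦ Set.mem_singleton_iff.mp hx ▸ ⟨d, hl⟩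

end Polynomial

section HilbertFunction

variable {K : Type} [Field K] {N : ℕ}

/-- The degree-`t` graded piece `I_t` of an ideal, whose dimension is `gradedDim K I t`. -/
def gradedPart (I : Ideal (MvPolynomial (Fin N) K)) (t : ℕ) :
    Submodule K (MvPolynomial (Fin N) K) :=
  homogeneousSubmodule (Fin N) K t ⊓ I.restrictScalars K

lemma gradedPart_inf (I J : Ideal (MvPolynomial (Fin N) K)) (t : ℕ) :
    gradedPart (I ⊓ J) t = gradedPart I t ⊓ gradedPart J t :=
  inf_inf_distrib_left (homogeneousSubmodule (Fin N) K t) (I.restrictScalars K)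
    (J.restrictScalars K)

lemma gradedPart_sup {I J : Ideal (MvPolynomial (Fin N) K)}
    (hI : I.IsHomogeneous (homogeneousSubmodule (Fin N) K))
    (hJ : J.IsHomogeneous (homogeneousSubmodule (Fin N) K)) (t : ℕ) :
    gradedPart (I ⊔ J) t = gradedPart I t ⊔ gradedPart J t := by
  refine le_antisymm ?_ (sup_le (inf_le_inf_left _ fun _ h ↦ Ideal.mem_sup_left h)
    (inf_le_inf_left _ fun _ h ↦ Ideal.mem_sup_right h))
  rintro f ⟨hf, hmem⟩
  obtain ⟨a, ha, b, hb, rfl⟩ := Submodule.mem_sup.mp hmem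
  rw [← homogeneousComponent_eq_self hf, map_add]
  exact Submodule.add_mem_sup
    ⟨homogeneousComponent_isHomogeneous t a, homogeneousComponent_mem_of_mem hI ha t⟩
    ⟨homogeneousComponent_isHomogeneous t b, homogeneousComponent_mem_of_mem hJ hb t⟩

lemma gradedPart_span_singleton_mul {d : ℕ} {l : MvPolynomial (Fin N) K}
    (hl : l.IsHomogeneous d) (hl0 : l ≠ 0) (I : Ideal (MvPolynomial (Fin N) K)) (t : ℕ) :
    gradedPart (Ideal.span {l} * I) (d + t) = (gradedPart I t).map (LinearMap.mulLeft K l) := by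
  apply le_antisymm
  · rintro f ⟨hf, hmem⟩
    obtain ⟨g, hg, rfl⟩ := Ideal.mem_span_singleton_mul.mp hmem
    exact ⟨g, ⟨isHomogeneous_of_isHomogeneous_mul hl hl0 hf, hg⟩, rfl⟩
  · rintro _ ⟨g, ⟨hg, hmem⟩, rfl⟩
    exact ⟨hl.mul hg, Ideal.mem_span_singleton_mul.mpr ⟨g, hmem, rfl⟩⟩

lemma gradedDim_span_singleton_mul {d : ℕ} {l : MvPolynomial (Fin N) K}
    (hl : l.IsHomogeneous d) (hl0 : l ≠ 0) (I : Ideal (MvPolynomial (Fin N) K)) (t : ℕ) :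
    gradedDim K (Ideal.span {l} * I) (d + t) = gradedDim K I t := by
  have hinj : Function.Injective (LinearMap.mulLeft K l) := fun _ _ h ↦ mul_left_cancel₀ hl0 h
  change Module.finrank K ↥(gradedPart (Ideal.span {l} * I) (d + t)) = _
  rw [gradedPart_span_singleton_mul hl hl0]
  exact (Submodule.equivMapOfInjective _ hinj _).finrank_eq.symm

lemma hilbFn_add_gradedDim (I : Ideal (MvPolynomial (Fin N) K)) (t : ℕ) :
    hilbFn K I t + gradedDim K I t = Module.finrank K ↥(homogeneousSubmodule (Fin N) K t) :=
  Nat.sub_add_cancel (Submodule.finrank_mono inf_le_left)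

lemma hilbFn_eq_zero_of_idealOfVars_pow_le {I : Ideal (MvPolynomial (Fin N) K)} {t : ℕ}
    (h : idealOfVars (Fin N) K ^ t ≤ I) : hilbFn K I t = 0 := by
  have hpart : homogeneousSubmodule (Fin N) K t ⊓ I.restrictScalars K =
      homogeneousSubmodule (Fin N) K t :=
    inf_eq_left.mpr fun _ hf ↦ h (mem_idealOfVars_pow_of_isHomogeneous hf)
  rw [hilbFn, gradedDim, hpart, Nat.sub_self]

lemma hilbFn_eq_finrank_of_le_idealOfVars_pow {I : Ideal (MvPolynomial (Fin N) K)} {k t : ℕ}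
    (h : I ≤ idealOfVars (Fin N) K ^ k) (htk : t < k) :
    hilbFn K I t = Module.finrank K ↥(homogeneousSubmodule (Fin N) K t) := by
  have hpart : homogeneousSubmodule (Fin N) K t ⊓ I.restrictScalars K = ⊥ :=
    (Submodule.eq_bot_iff _).mpr fun _ hf ↦
      eq_zero_of_isHomogeneous_of_mem_idealOfVars_pow hf.1 (h hf.2) htk
  rw [hilbFn, gradedDim, hpart, finrank_bot, Nat.sub_zero]

lemma hilbFn_inf_add_hilbFn_sup {I J : Ideal (MvPolynomial (Fin N) K)}
    (hI : I.IsHomogeneous (homogeneousSubmodule (Fin N) K))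
    (hJ : J.IsHomogeneous (homogeneousSubmodule (Fin N) K)) (t : ℕ) :
    hilbFn K (I ⊓ J) t + hilbFn K (I ⊔ J) t = hilbFn K I t + hilbFn K J t := by
  have : FiniteDimensional K ↥(gradedPart I t) := Submodule.finiteDimensional_of_le inf_le_left
  have : FiniteDimensional K ↥(gradedPart J t) := Submodule.finiteDimensional_of_le inf_le_left
  have hdim : gradedDim K (I ⊔ J) t + gradedDim K (I ⊓ J) t =
      gradedDim K I t + gradedDim K J t := by
    have := Submodule.finrank_sup_add_finrank_inf_eq (gradedPart I t) (gradedPart J t)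
    rwa [← gradedPart_sup hI hJ, ← gradedPart_inf] at this
  have := hilbFn_add_gradedDim I t
  have := hilbFn_add_gradedDim J t
  have := hilbFn_add_gradedDim (I ⊓ J) t
  have := hilbFn_add_gradedDim (I ⊔ J) t
  omega

lemma hilbFn_inf_le {I J : Ideal (MvPolynomial (Fin N) K)}
    (hI : I.IsHomogeneous (homogeneousSubmodule (Fin N) K))
    (hJ : J.IsHomogeneous (homogeneousSubmodule (Fin N) K)) (t : ℕ) :
    hilbFn K (I ⊓ J) t ≤ hilbFn K I t + hilbFn K J t :=
  hilbFn_inf_add_hilbFn_sup hI hJ t ▸ Nat.le_add_right _ _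

lemma hilbFn_sup_span_singleton {I : Ideal (MvPolynomial (Fin N) K)}
    (hI : I.IsHomogeneous (homogeneousSubmodule (Fin N) K)) {d : ℕ} {l : MvPolynomial (Fin N) K}
    (hl : l.IsHomogeneous d) (hl0 : l ≠ 0) (hreg : ∀ f, l * f ∈ I → f ∈ I) (t : ℕ) :
    hilbFn K (I ⊔ Ideal.span {l}) (d + t) + hilbFn K I t = hilbFn K I (d + t) := by
  have hinf : I ⊓ Ideal.span {l} = Ideal.span {l} * I := by
    refine le_antisymm ?_ (le_inf Ideal.mul_le_right Ideal.mul_le_left)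
    rintro f ⟨hf, hmem⟩
    obtain ⟨g, rfl⟩ := Ideal.mem_span_singleton.mp hmem
    exact Ideal.mem_span_singleton_mul.mpr ⟨g, hreg g hf, rfl⟩
  have hmod := hilbFn_inf_add_hilbFn_sup hI (isHomogeneous_span_singleton hl) (d + t)
  have hdim_inf : gradedDim K (I ⊓ Ideal.span {l}) (d + t) = gradedDim K I t := by
    rw [hinf, gradedDim_span_singleton_mul hl hl0]
  have hdim_span : gradedDim K (Ideal.span {l}) (d + t) =
      gradedDim K (⊤ : Ideal (MvPolynomial (Fin N) K)) t := by
    simpa only [Ideal.mul_top] using gradedDim_span_singleton_mul hl hl0 ⊤ t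
  have htop : hilbFn K (⊤ : Ideal (MvPolynomial (Fin N) K)) t = 0 :=
    hilbFn_eq_zero_of_idealOfVars_pow_le le_top
  have := hilbFn_add_gradedDim I t
  have := hilbFn_add_gradedDim (⊤ : Ideal (MvPolynomial (Fin N) K)) t
  have := hilbFn_add_gradedDim (I ⊓ Ideal.span {l}) (d + t)
  have := hilbFn_add_gradedDim (Ideal.span {l}) (d + t)
  omega

variable {ι : Type*} {I : ι → Ideal (MvPolynomial (Fin N) K)}

lemma hilbFn_iInf_le (hI : ∀ i, (I i).IsHomogeneous (homogeneousSubmodule (Fin N) K))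
    (T : Finset ι) (t : ℕ) : hilbFn K (⨅ i ∈ T, I i) t ≤ ∑ i ∈ T, hilbFn K (I i) t := by
  classical
  induction T using Finset.induction_on with
  | empty => simp [hilbFn_eq_zero_of_idealOfVars_pow_le]
  | insert j T hj ih =>
    rw [Finset.iInf_insert, Finset.sum_insert hj]
    exact (hilbFn_inf_le (hI j) (.iInf₂ fun i _ ↦ hI i) t).trans (Nat.add_le_add_left ih _)

lemma eventually_hilbFn_iInf_eq_sum
    (hI : ∀ i, (I i).IsHomogeneous (homogeneousSubmodule (Fin N) K)) {T : Finset ι}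
    (hcomax : (T : Set ι).Pairwise fun i j ↦ idealOfVars (Fin N) K ≤ (I i ⊔ I j).radical) :
    ∀ᶠ t in Filter.atTop, hilbFn K (⨅ i ∈ T, I i) t = ∑ i ∈ T, hilbFn K (I i) t := by
  classical
  induction T using Finset.induction_on with
  | empty => simp [hilbFn_eq_zero_of_idealOfVars_pow_le]
  | insert j T hj ih =>
    rw [Finset.coe_insert, Set.pairwise_insert_of_notMem (mod_cast hj)] at hcomax
    obtain ⟨a, ha⟩ := Ideal.exists_pow_le_of_le_radical_of_fg
      (le_radical_sup_iInf fun i hi ↦ (hcomax.2 i hi).1) (idealOfVars_fg (Fin N) K)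
    filter_upwards [ih hcomax.1, Filter.eventually_ge_atTop a] with t ht hat
    have hsup := hilbFn_eq_zero_of_idealOfVars_pow_le ((Ideal.pow_le_pow_right hat).trans ha)
    have hmod := hilbFn_inf_add_hilbFn_sup (hI j) (.iInf₂ fun i (_ : i ∈ T) ↦ hI i) t
    rw [Finset.iInf_insert, Finset.sum_insert hj, ← ht]
    omega

lemma regIndex_iInf_le_of_subset
    (hI : ∀ i, (I i).IsHomogeneous (homogeneousSubmodule (Fin N) K)) {e : ι → ℕ} {S T : Finset ι}
    (hle : ∀ i ∈ S, ∀ t, hilbFn K (I i) t ≤ e i)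
    (hS : ∃ t, hilbFn K (⨅ i ∈ S, I i) t = ∑ i ∈ S, e i) (hTS : T ⊆ S) :
    regIndex K (⨅ i ∈ T, I i) (∑ i ∈ T, e i) ≤ regIndex K (⨅ i ∈ S, I i) (∑ i ∈ S, e i) := by
  classical
  have hbound {A : Finset ι} (hA : A ⊆ S) (t : ℕ) :
      hilbFn K (⨅ i ∈ A, I i) t ≤ ∑ i ∈ A, e i :=
    (hilbFn_iInf_le hI A t).trans (Finset.sum_le_sum fun i hi ↦ hle i (hA hi) t)
  refine csInf_le_csInf (OrderBot.bddBelow _) hS fun t (ht : hilbFn K _ t = _) ↦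
    (hbound hTS t).antisymm ?_
  have hsub := hilbFn_inf_le (I := ⨅ i ∈ T, I i) (J := ⨅ i ∈ S \ T, I i)
    (.iInf₂ fun i _ ↦ hI i) (.iInf₂ fun i _ ↦ hI i) t
  rw [← Finset.iInf_union, Finset.union_sdiff_of_subset hTS, ht, ← Finset.sum_sdiff hTS] at hsub
  have hcompl := hbound (Finset.sdiff_subset (s := S) (t := T)) t
  omega

end HilbertFunction

section Point

variable {K : Type} [Field K] {N : ℕ}

lemma isHomogeneous_pointIdeal (p : Fin N → K) :
    (pointIdeal p).IsHomogeneous (homogeneousSubmodule (Fin N) K) :=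
  Ideal.homogeneous_span _ _ fun _ hf ↦ ⟨1, hf.1⟩

lemma pointIdeal_le_idealOfVars (p : Fin N → K) : pointIdeal p ≤ idealOfVars (Fin N) K :=
  Ideal.span_le.mpr fun _ hf ↦ by simpa using mem_idealOfVars_pow_of_isHomogeneous hf.1

lemma idealOfVars_le_pointIdeal_sup {p : Fin N → K} {l : MvPolynomial (Fin N) K}
    {I : Ideal (MvPolynomial (Fin N) K)} (hl : l.IsHomogeneous 1) (hlp : eval p l ≠ 0)
    (hlI : l ∈ I) : idealOfVars (Fin N) K ≤ pointIdeal p ⊔ I := by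
  rw [idealOfVars, Ideal.span_le]
  rintro _ ⟨j, rfl⟩
  rw [← sub_add_cancel (X j) (C (p j / eval p l) * l)]
  refine Submodule.add_mem_sup (Ideal.subset_span ⟨?_, ?_⟩) (I.mul_mem_left _ hlI)
  · exact (isHomogeneous_X K j).sub (hl.C_mul _)
  · simp [hlp]

lemma idealOfVars_le_pointIdeal_sup_pointIdeal {p q : Fin N → K} (hq : q ≠ 0)
    (hpq : ∀ c : K, p ≠ c • q) : idealOfVars (Fin N) K ≤ pointIdeal p ⊔ pointIdeal q := by
  obtain ⟨k, hk : q k ≠ 0⟩ := Function.ne_iff.mp hq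
  obtain ⟨j, hj⟩ := Function.ne_iff.mp (hpq (p k / q k))
  have hl : (C (q k) * X j - C (q j) * X k : MvPolynomial (Fin N) K).IsHomogeneous 1 :=
    (isHomogeneous_C_mul_X _ _).sub (isHomogeneous_C_mul_X _ _)
  refine idealOfVars_le_pointIdeal_sup hl (fun h ↦ hj ?_)
    (Ideal.subset_span ⟨hl, by simp [mul_comm]⟩)
  simp only [map_sub, map_mul, eval_C, eval_X] at h
  simp only [Pi.smul_apply, smul_eq_mul]
  field_simp
  linear_combination h

/-- The expansion of a polynomial along the direction of the point `p` with respect to the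
parameter `l`: the substitution `x ↦ x + ((T - l) / l(p)) • p` with values in `R[T]`. It is used to
show that a linear form `l` with `l(p) ≠ 0` is regular modulo the powers of `pointIdeal p`. -/
def pointExpansion (p : Fin N → K) (l : MvPolynomial (Fin N) K) :
    MvPolynomial (Fin N) K →ₐ[K] Polynomial (MvPolynomial (Fin N) K) :=
  aeval fun j ↦ Polynomial.C (X j) +
    Polynomial.C (C (p j / eval p l)) * (Polynomial.X - Polynomial.C l)

lemma pointExpansion_of_isHomogeneous_one (p : Fin N → K) (l : MvPolynomial (Fin N) K)
    {g : MvPolynomial (Fin N) K} (hg : g.IsHomogeneous 1) :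
    pointExpansion p l g = Polynomial.C g +
      Polynomial.C (C (eval p g / eval p l)) * (Polynomial.X - Polynomial.C l) := by
  rw [← mem_homogeneousSubmodule, homogeneousSubmodule_one_eq_span_X] at hg
  induction hg using Submodule.span_induction with
  | mem g hg => obtain ⟨j, rfl⟩ := hg; simp [pointExpansion]
  | zero => simp
  | add g h _ _ ihg ihh => simp only [map_add, ihg, ihh, add_div]; ring
  | smul c g _ ih =>
    rw [map_smul, ih, smul_eval, mul_div_assoc, smul_eq_C_mul, Algebra.smul_def,
      Polynomial.algebraMap_apply, MvPolynomial.algebraMap_eq]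
    simp only [map_mul]
    ring

lemma eval_pointExpansion (p : Fin N → K) (l f : MvPolynomial (Fin N) K) :
    (pointExpansion p l f).eval l = f := by
  have hcomp : ((Polynomial.aeval (R := MvPolynomial (Fin N) K) l).restrictScalars K).comp
      (pointExpansion p l) = AlgHom.id K _ := by
    ext j
    simp [pointExpansion]
  simpa [Polynomial.aeval_def] using DFunLike.congr_fun hcomp f

lemma coeff_pointExpansion_mem {p : Fin N → K} {k : ℕ} {f : MvPolynomial (Fin N) K}
    (hf : f ∈ pointIdeal p ^ k) (l : MvPolynomial (Fin N) K) (i : ℕ) :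
    (pointExpansion p l f).coeff i ∈ pointIdeal p ^ k := by
  have hmap : (pointIdeal p).map (pointExpansion p l) ≤ (pointIdeal p).map Polynomial.C := by
    conv_lhs => rw [pointIdeal, Ideal.map_span]
    rw [Ideal.span_le]
    rintro _ ⟨g, ⟨hg, hgp⟩, rfl⟩
    have hfix : pointExpansion p l g = Polynomial.C g := by
      simp [pointExpansion_of_isHomogeneous_one p l hg, hgp]
    exact hfix ▸ Ideal.mem_map_of_mem _ (Ideal.subset_span ⟨hg, hgp⟩)
  have hmem := Ideal.mem_map_of_mem (pointExpansion p l) hf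
  rw [Ideal.map_pow] at hmem
  have hmem' := Ideal.pow_right_mono hmap k hmem
  rw [← Ideal.map_pow] at hmem'
  exact Ideal.mem_map_C_iff.mp hmem' i

lemma mem_pointIdeal_pow_of_mul_mem {p : Fin N → K} {l f : MvPolynomial (Fin N) K} {k : ℕ}
    (hl : l.IsHomogeneous 1) (hlp : eval p l ≠ 0) (hf : l * f ∈ pointIdeal p ^ k) :
    f ∈ pointIdeal p ^ k := by
  have hX : pointExpansion p l l = Polynomial.X := by
    simp [pointExpansion_of_isHomogeneous_one p l hl, hlp]
  have hcoeff (i : ℕ) : (pointExpansion p l f).coeff i ∈ pointIdeal p ^ k := by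
    simpa only [map_mul, hX, Polynomial.coeff_X_mul] using coeff_pointExpansion_mem hf l (i + 1)
  rw [← eval_pointExpansion p l f, Polynomial.eval_eq_sum_range]
  exact Submodule.sum_mem _ fun i _ ↦ Ideal.mul_mem_right _ _ (hcoeff i)

lemma hilbFn_pointIdeal_pow_succ {p : Fin N → K} (hp : p ≠ 0) {k t : ℕ} (hkt : k ≤ t + 1) :
    hilbFn K (pointIdeal p ^ k) (t + 1) = hilbFn K (pointIdeal p ^ k) t := by
  obtain ⟨j, hj : p j ≠ 0⟩ := Function.ne_iff.mp hp
  have hl : (X j : MvPolynomial (Fin N) K).IsHomogeneous 1 := isHomogeneous_X K j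
  have hlp : eval p (X j) ≠ 0 := by rwa [eval_X]
  have hsup : idealOfVars (Fin N) K ^ (t + 1) ≤ pointIdeal p ^ k ⊔ Ideal.span {X j} :=
    calc idealOfVars (Fin N) K ^ (t + 1) ≤ idealOfVars (Fin N) K ^ k := Ideal.pow_le_pow_right hkt
      _ ≤ (Ideal.span {X j} ⊔ pointIdeal p) ^ k := by
        rw [sup_comm]
        exact Ideal.pow_right_mono
          (idealOfVars_le_pointIdeal_sup hl hlp (Ideal.mem_span_singleton_self _)) k
      _ ≤ Ideal.span {X j} ⊔ pointIdeal p ^ k := sup_pow_le_sup_pow _ _ k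
      _ = _ := sup_comm _ _
  have hshift := hilbFn_sup_span_singleton (isHomogeneous_ideal_pow (isHomogeneous_pointIdeal p) k)
    hl (X_ne_zero j) (fun _ ↦ mem_pointIdeal_pow_of_mul_mem hl hlp) t
  rw [add_comm 1 t, hilbFn_eq_zero_of_idealOfVars_pow_le hsup, zero_add] at hshift
  exact hshift.symm

lemma hilbFn_pointIdeal_pow {n : ℕ} {p : Fin (n + 1) → K} (hp : p ≠ 0) {k : ℕ} (hk : 0 < k)
    (t : ℕ) : hilbFn K (pointIdeal p ^ k) t = (min t (k - 1) + n).choose n := by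
  have hlow {t : ℕ} (ht : t < k) : hilbFn K (pointIdeal p ^ k) t = (t + n).choose n := by
    rw [hilbFn_eq_finrank_of_le_idealOfVars_pow
      (Ideal.pow_right_mono (pointIdeal_le_idealOfVars p) k) ht, finrank_homogeneousSubmodule]
  induction t with
  | zero => simpa using hlow hk
  | succ t ih =>
    rcases lt_or_ge (t + 1) k with ht | ht
    · rw [hlow ht, min_eq_left (by omega)]
    · rw [hilbFn_pointIdeal_pow_succ hp ht, ih]
      congr 2
      omega

lemma hilbFn_pointIdeal_pow_le {n : ℕ} {p : Fin (n + 1) → K} (hp : p ≠ 0) {k : ℕ} (hk : 0 < k)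
    (t : ℕ) : hilbFn K (pointIdeal p ^ k) t ≤ (k + n - 1).choose n := by
  rw [hilbFn_pointIdeal_pow hp hk]
  exact Nat.choose_le_choose n (by omega)

lemma hilbFn_pointIdeal_pow_of_le {n : ℕ} {p : Fin (n + 1) → K} (hp : p ≠ 0) {k t : ℕ}
    (hk : 0 < k) (hkt : k ≤ t + 1) : hilbFn K (pointIdeal p ^ k) t = (k + n - 1).choose n := by
  rw [hilbFn_pointIdeal_pow hp hk]
  congr 1
  omega

end Point

theorem stmt3_general {K : Type} [Field K] {ι : Type*} {n : ℕ} (p : ι → Fin (n + 1) → K)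
    (m : ι → ℕ) {S T : Finset ι} (hTS : T ⊆ S) (hp : ∀ i ∈ S, p i ≠ 0)
    (hdist : (S : Set ι).Pairwise fun i j ↦ ∀ c : K, p i ≠ c • p j) (hm : ∀ i ∈ S, 0 < m i) :
    regIndex K (⨅ i ∈ T, pointIdeal (p i) ^ m i) (∑ i ∈ T, (m i + n - 1).choose n) ≤
      regIndex K (⨅ i ∈ S, pointIdeal (p i) ^ m i) (∑ i ∈ S, (m i + n - 1).choose n) := by
  have hhom (i : ι) : (pointIdeal (p i) ^ m i).IsHomogeneous (homogeneousSubmodule _ K) :=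
    isHomogeneous_ideal_pow (isHomogeneous_pointIdeal _) _
  have hcomax : (S : Set ι).Pairwise fun i j ↦
      idealOfVars _ K ≤ (pointIdeal (p i) ^ m i ⊔ pointIdeal (p j) ^ m j).radical :=
    fun i hi j hj hij ↦ (idealOfVars_le_pointIdeal_sup_pointIdeal (hp j hj)
      (hdist hi hj hij)).trans (sup_le_radical_pow_sup_pow _ _ _ _)
  obtain ⟨t, hsum, ht⟩ := ((eventually_hilbFn_iInf_eq_sum hhom hcomax).and
    (Filter.eventually_ge_atTop (S.sup m))).exists
  refine regIndex_iInf_le_of_subset hhom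
    (fun i hi ↦ hilbFn_pointIdeal_pow_le (hp i hi) (hm i hi)) ⟨t, hsum.trans ?_⟩ hTS
  exact Finset.sum_congr rfl fun i hi ↦ hilbFn_pointIdeal_pow_of_le (hp i hi) (hm i hi)
    ((Finset.le_sup hi).trans (ht.trans t.le_succ))

/-- Lemma 2.6 (Thien): if `Y ⊆ X` then `reg(R/J) ≤ reg(R/I)`. -/
theorem stmt3 {K : Type} [Field K] [IsAlgClosed K] {n s : ℕ}
    (p : Fin s → Fin (n + 1) → K) (hdist : ProjDistinct p)
    (m : Fin s → ℕ) (hm : ∀ i, 0 < m i) (T : Finset (Fin s)) :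
    regIndex K (⨅ i ∈ T, pointIdeal (p i) ^ m i) (∑ i ∈ T, (m i + n - 1).choose n)
      ≤ regFat K p m := by
  simpa [regFat, fatIdeal, fatMult] using stmt3_general p m (Finset.subset_univ T)
    (fun i _ ↦ hdist.1 i) (fun i _ j _ hij ↦ hdist.2 i j hij) fun i _ ↦ hm i
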